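/- Let p ≥ 2 be real. For every real sequence (x_n)_{n≥1} with ∑_{n=1}^∞ |x_n|^p < ∞, setting y_n = (1/n)·∑_{k=1}^n x_k, one has ∑_{n=1}^∞ |y_n - x_n|^p ≤ (1/m_p) · ∑_{n=1}^∞ |x_n|^p; moreover 1/m_p is the least such constant: for every c < 1/m_p there exists a real sequence (x_n) with 0 < ∑_{n=1}^∞ |x_n|^p < ∞ and ∑_{n=1}^∞ |y_n - x_n|^p > c · ∑_{n=1}^∞ |x_n|^p. That is, the operator norm of C - I on ℓ^p equals m_p^{-1/p}. -/

import Mathlib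

/-!
The function `x ↦ |x| ^ p` is convex with a remainder: at each `y` it has a subgradient `s` with
`|y| ^ p + s * (x - y) + m_p * |x - y| ^ p ≤ |x| ^ p`. When `x` and `y` have the same sign the
constant `1` works; when their signs differ, homogeneity reduces the claim to `m_p ≤ f_p t` on
`[0, 1]`, and `f_p t ≤ f_p (1 - t)` for `t ≤ 1 / 2` confines this to `[0, 1 / 2]`. Now let `y` and
`z` be the means of the first `n + 1` and of the first `n` terms of a sequence, so that
`x_{n+1} - y = n * (y - z)`. In the inequality for `x = x_{n+1}` plus `n` times the one for `x = z`
the terms with `s` cancel, which leaves a telescoping bound.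

For optimality, write `α = 1 / t` and let the means be `1` up to index `N` and decay like
`(N / n) ^ α` afterwards. As `N → ∞`, the quotient of the two sums of `p`-th powers tends to
`α ^ p / (α * p - 1 + (α - 1) ^ p) = 1 / f_p t`.
-/

/-- `m_p`: the minimum value of `f_p(t) = p t^(p-1) + (1-t)^p - t^p` on `[0, 1/2]`. -/
noncomputable def mVal (p : ℝ) : ℝ :=
  sInf ((fun t : ℝ => p * t ^ (p - 1) + (1 - t) ^ p - t ^ p) '' Set.Icc 0 (1 / 2))

open Filter Finset Topology

section PowerInequalities

variable {a b q p : ℝ}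

lemma rpow_add_one_add_mul_sub_le (ha : 0 ≤ a) (hb : 0 ≤ b) (hq : 1 ≤ q) :
    a ^ (q + 1) + q * a ^ q * (b - a) ≤ a * b ^ q := by
  rcases ha.eq_or_lt with rfl | ha
  · simp [Real.zero_rpow (by linarith : q + 1 ≠ 0), Real.zero_rpow (by linarith : q ≠ 0)]
  have bernoulli : 1 + q * (b / a - 1) ≤ (b / a) ^ q := by
    have := one_add_mul_self_le_rpow_one_add
      (by linarith [div_nonneg hb ha.le] : -1 ≤ b / a - 1) hq
    rwa [add_sub_cancel] at this
  rw [Real.div_rpow hb ha.le, le_div_iff₀ (by positivity)] at bernoulli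
  calc a ^ (q + 1) + q * a ^ q * (b - a) = a * ((1 + q * (b / a - 1)) * a ^ q) := by
        rw [Real.rpow_add_one ha.ne']; field_simp
    _ ≤ a * b ^ q := by gcongr

lemma abs_sub_rpow_add_one_le (ha : 0 ≤ a) (hb : 0 ≤ b) (hq : 1 ≤ q) :
    |b - a| ^ (q + 1) ≤ (b - a) * (b ^ q - a ^ q) := by
  wlog hab : a ≤ b generalizing a b
  · rw [abs_sub_comm]
    linarith [this hb ha (le_of_not_ge hab)]
  have hsub : 0 ≤ b - a := sub_nonneg.2 hab
  have superadd : a ^ q + (b - a) ^ q ≤ b ^ q := by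
    simpa using Real.add_rpow_le_rpow_add ha hsub hq
  rw [abs_of_nonneg hsub, Real.rpow_add_one' hsub (by linarith), mul_comm]
  gcongr
  linarith

lemma rpow_add_mul_sub_add_abs_sub_rpow_le (ha : 0 ≤ a) (hb : 0 ≤ b) (hp : 2 ≤ p) :
    a ^ p + p * a ^ (p - 1) * (b - a) + |b - a| ^ p ≤ b ^ p := by
  obtain ⟨q, rfl⟩ : ∃ q, p = q + 1 := ⟨p - 1, by ring⟩
  have hq : 1 ≤ q := by linarith
  rw [add_sub_cancel_right]
  calc a ^ (q + 1) + (q + 1) * a ^ q * (b - a) + |b - a| ^ (q + 1)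
      ≤ a * b ^ q + a ^ q * (b - a) + (b - a) * (b ^ q - a ^ q) := by
        linarith [rpow_add_one_add_mul_sub_le ha hb hq, abs_sub_rpow_add_one_le ha hb hq]
    _ = b ^ (q + 1) := by rw [Real.rpow_add_one' hb (by linarith)]; ring

end PowerInequalities

section Limits

lemma tendsto_natCast_mul_one_add_div_rpow_sub_one (α p : ℝ) :
    Tendsto (fun n : ℕ ↦ (n : ℝ) * ((1 + α / n) ^ p - 1)) atTop (𝓝 (α * p)) := by
  have hderiv : HasDerivAt (fun h : ℝ ↦ (1 + α * h) ^ p) (α * p) 0 := by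
    simpa using (((hasDerivAt_id (0 : ℝ)).const_mul α).const_add 1).rpow_const (p := p)
      (Or.inl (by simp))
  have hinv : Tendsto (fun n : ℕ ↦ (n : ℝ)⁻¹) atTop (𝓝[≠] 0) := by
    refine tendsto_nhdsWithin_iff.2 ⟨tendsto_inv_atTop_nhds_zero_nat, ?_⟩
    filter_upwards [eventually_ne_atTop 0] with n hn
    simpa using hn
  refine (hderiv.tendsto_slope_zero.comp hinv).congr fun n ↦ ?_
  simp [div_eq_mul_inv]

lemma le_tsum_of_sub_succ_le {u v : ℕ → ℝ} (hu : Tendsto u atTop (𝓝 0)) (hv : Summable v)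
    (h : ∀ n, u n - u (n + 1) ≤ v n) : u 0 ≤ ∑' n, v n := by
  have hpartial : ∀ n, u 0 - u n ≤ ∑ k ∈ range n, v k := fun n ↦
    sum_range_sub' u n ▸ sum_le_sum fun k _ ↦ h k
  simpa using le_of_tendsto_of_tendsto' (hu.const_sub (u 0)) hv.hasSum.tendsto_sum_nat hpartial

end Limits

section MinimalConstant

/-- The function `f_p` whose minimum on `[0, 1 / 2]` is `m_p`. -/
noncomputable def mFun (p t : ℝ) : ℝ := p * t ^ (p - 1) + (1 - t) ^ p - t ^ p

variable {p t : ℝ}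

lemma continuous_mFun (hp : 1 ≤ p) : Continuous (mFun p) := by
  have h₀ : 0 ≤ p := by linarith
  have h₁ : 0 ≤ p - 1 := by linarith
  unfold mFun
  fun_prop (disch := assumption)

lemma mFun_zero (hp : 1 < p) : mFun p 0 = 1 := by
  simp [mFun, Real.zero_rpow (by linarith : p - 1 ≠ 0), Real.zero_rpow (by linarith : p ≠ 0)]

lemma mFun_pos (hp : 1 ≤ p) (ht₀ : 0 ≤ t) (ht₁ : t < 1) : 0 < mFun p t := by
  have hpow : t ^ p ≤ t ^ (p - 1) :=
    Real.rpow_le_rpow_of_exponent_ge' ht₀ ht₁.le (by linarith) (by linarith)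
  have hmul : t ^ (p - 1) ≤ p * t ^ (p - 1) := le_mul_of_one_le_left (by positivity) hp
  have : 0 < (1 - t) ^ p := Real.rpow_pos_of_pos (sub_pos.2 ht₁) p
  unfold mFun
  linarith

lemma mFun_le_mFun_one_sub (hp : 2 ≤ p) (ht₀ : 0 ≤ t) (ht : t ≤ 1 / 2) :
    mFun p t ≤ mFun p (1 - t) := by
  obtain ⟨r, rfl⟩ : ∃ r, p = r + 1 + 1 := ⟨p - 2, by ring⟩
  have hr : 0 ≤ r := by linarith
  have hts : t ≤ 1 - t := by linarith
  have hs₀ : 0 ≤ 1 - t := by linarith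
  have hpow : t ^ (r + 1 + 1) ≤ (1 - t) ^ (r + 1 + 1) := by gcongr
  have hpow' : t ^ r ≤ (1 - t) ^ r := by gcongr
  have hdiff : mFun (r + 1 + 1) (1 - t) - mFun (r + 1 + 1) t =
      r * ((1 - t) ^ (r + 1 + 1) - t ^ (r + 1 + 1)) +
        (r + 2) * (t * (1 - t)) * ((1 - t) ^ r - t ^ r) := by
    simp only [mFun, add_sub_cancel_right, sub_sub_cancel,
      Real.rpow_add_one' ht₀ (by linarith : r + 1 + 1 ≠ 0),
      Real.rpow_add_one' hs₀ (by linarith : r + 1 + 1 ≠ 0),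
      Real.rpow_add_one' ht₀ (by linarith : r + 1 ≠ 0),
      Real.rpow_add_one' hs₀ (by linarith : r + 1 ≠ 0)]
    ring
  have h₁ := mul_nonneg hr (sub_nonneg.2 hpow)
  have h₂ : 0 ≤ (r + 2) * (t * (1 - t)) * ((1 - t) ^ r - t ^ r) :=
    mul_nonneg (by positivity) (sub_nonneg.2 hpow')
  linarith

lemma mFun_div_add_mul_rpow {a b : ℝ} (ha : 0 ≤ a) (hb : 0 ≤ b) (hab : 0 < a + b) :
    mFun p (a / (a + b)) * (a + b) ^ p = p * a ^ (p - 1) * (a + b) + b ^ p - a ^ p := by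
  have hsub : 1 - a / (a + b) = b / (a + b) := by field_simp; ring
  rw [mFun, hsub, Real.div_rpow ha hab.le, Real.div_rpow ha hab.le, Real.div_rpow hb hab.le,
    Real.rpow_sub_one hab.ne']
  field_simp

lemma mVal_le_mFun_of_le_half (hp : 1 ≤ p) (ht₀ : 0 ≤ t) (ht : t ≤ 1 / 2) :
    mVal p ≤ mFun p t :=
  csInf_le (isCompact_Icc.image (continuous_mFun hp)).bddBelow ⟨t, ⟨ht₀, ht⟩, rfl⟩

lemma mVal_le_mFun (hp : 2 ≤ p) (ht₀ : 0 ≤ t) (ht₁ : t ≤ 1) : mVal p ≤ mFun p t := by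
  rcases le_total t (1 / 2) with ht | ht
  · exact mVal_le_mFun_of_le_half (by linarith) ht₀ ht
  · have hs₀ : 0 ≤ 1 - t := by linarith
    have hs : 1 - t ≤ 1 / 2 := by linarith
    calc mVal p ≤ mFun p (1 - t) := mVal_le_mFun_of_le_half (by linarith) hs₀ hs
      _ ≤ mFun p t := by simpa using mFun_le_mFun_one_sub hp hs₀ hs

lemma exists_mFun_eq_mVal (hp : 1 ≤ p) : ∃ t ∈ Set.Icc (0 : ℝ) (1 / 2), mFun p t = mVal p := by
  obtain ⟨t, ht, h⟩ := isCompact_Icc.exists_sInf_image_eq (Set.nonempty_Icc.2 one_half_pos.le)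
    (continuous_mFun hp).continuousOn
  exact ⟨t, ht, h.symm⟩

lemma mVal_pos (hp : 1 ≤ p) : 0 < mVal p := by
  obtain ⟨t, ⟨ht₀, ht⟩, h⟩ := exists_mFun_eq_mVal hp
  exact h ▸ mFun_pos hp ht₀ (by linarith)

lemma mVal_le_one (hp : 1 < p) : mVal p ≤ 1 :=
  mFun_zero hp ▸ mVal_le_mFun_of_le_half hp.le le_rfl one_half_pos.le

lemma exists_mul_mFun_lt_one {c : ℝ} (hp : 1 ≤ p) (hc : c < (mVal p)⁻¹) :
    ∃ t ∈ Set.Ioo (0 : ℝ) (1 / 2), c * mFun p t < 1 := by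
  obtain ⟨t, ht, hmin⟩ := exists_mFun_eq_mVal hp
  have hct : c * mFun p t < 1 := by
    rwa [hmin, ← lt_div_iff₀ (mVal_pos hp), one_div]
  rw [← closure_Ioo one_half_pos.ne] at ht
  have hopen : IsOpen {s | c * mFun p s < 1} :=
    isOpen_lt ((continuous_mFun hp).const_mul c) continuous_const
  obtain ⟨s, hs, hs_mem⟩ := mem_closure_iff.1 ht _ hopen hct
  exact ⟨s, hs_mem, hs⟩

end MinimalConstant

section UpperBound

variable {p : ℝ}

lemma mVal_mul_add_rpow_le {a b : ℝ} (hp : 2 ≤ p) (ha : 0 ≤ a) (hb : 0 ≤ b) :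
    mVal p * (a + b) ^ p ≤ p * a ^ (p - 1) * (a + b) + b ^ p - a ^ p := by
  rcases (add_nonneg ha hb).eq_or_lt with hab | hab
  · obtain ⟨rfl, rfl⟩ := (add_eq_zero_iff_of_nonneg ha hb).1 hab.symm
    simp [Real.zero_rpow (by linarith : p ≠ 0)]
  · rw [← mFun_div_add_mul_rpow ha hb hab]
    gcongr
    exact mVal_le_mFun hp (by positivity) (div_le_one_of_le₀ (by linarith) hab.le)

lemma exists_subgradient_abs_rpow (hp : 2 ≤ p) (y : ℝ) :
    ∃ s, ∀ x, |y| ^ p + s * (x - y) + mVal p * |x - y| ^ p ≤ |x| ^ p := by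
  wlog hy : 0 ≤ y generalizing y
  · obtain ⟨s, hs⟩ := this (-y) (by linarith)
    refine ⟨-s, fun x ↦ ?_⟩
    have := hs (-x)
    rw [abs_neg, abs_neg, neg_sub_neg, abs_sub_comm] at this
    linarith
  refine ⟨p * y ^ (p - 1), fun x ↦ ?_⟩
  rw [abs_of_nonneg hy]
  rcases le_total 0 x with hx | hx
  · have hm : mVal p * |x - y| ^ p ≤ |x - y| ^ p :=
      mul_le_of_le_one_left (by positivity) (mVal_le_one (by linarith))
    rw [abs_of_nonneg hx]
    linarith [rpow_add_mul_sub_add_abs_sub_rpow_le hy hx hp]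
  · have habs : |x - y| = y + |x| := by
      rw [abs_of_nonpos hx, abs_of_nonpos (by linarith)]; ring
    have hx' : x - y = -(y + |x|) := by rw [abs_of_nonpos hx]; ring
    rw [habs, hx']
    linarith [mVal_mul_add_rpow_le hp hy (abs_nonneg x)]

lemma mVal_mul_abs_sub_rpow_add_le {n x y z : ℝ} (hp : 2 ≤ p) (hn : 0 ≤ n)
    (h : (n + 1) * y = x + n * z) :
    mVal p * |y - x| ^ p + (n + 1) * |y| ^ p ≤ |x| ^ p + n * |z| ^ p := by
  obtain ⟨s, hs⟩ := exists_subgradient_abs_rpow hp y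
  have hz : |y| ^ p + s * (z - y) ≤ |z| ^ p := by
    have : 0 ≤ mVal p * |z - y| ^ p := mul_nonneg (mVal_pos (by linarith)).le (by positivity)
    linarith [hs z]
  have hcancel : s * (x - y) + n * (s * (z - y)) = 0 := by linear_combination -s * h
  rw [abs_sub_comm y]
  linarith [hs x, mul_le_mul_of_nonneg_left hz hn]

/-- The value `y_n = (1 / n) * (x_1 + ⋯ + x_n)` of the Cesàro operator; the term `x 0` is
ignored, and the value at `n = 0` is `0`. -/
noncomputable def cesaroMean (x : ℕ → ℝ) (n : ℕ) : ℝ :=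
  (1 / (n : ℝ)) * ∑ k ∈ range n, x (k + 1)

lemma cesaroMean_succ (x : ℕ → ℝ) (n : ℕ) :
    cesaroMean x (n + 1) = (1 / ((n : ℝ) + 1)) * ∑ k ∈ range (n + 1), x (k + 1) := by
  rw [cesaroMean, Nat.cast_succ]

lemma natCast_mul_cesaroMean (x : ℕ → ℝ) (n : ℕ) :
    n * cesaroMean x n = ∑ k ∈ range n, x (k + 1) := by
  rcases eq_or_ne n 0 with rfl | hn
  · simp
  · rw [cesaroMean]
    field_simp

lemma add_one_mul_cesaroMean_succ (x : ℕ → ℝ) (n : ℕ) :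
    ((n : ℝ) + 1) * cesaroMean x (n + 1) = x (n + 1) + n * cesaroMean x n := by
  rw [← Nat.cast_succ, natCast_mul_cesaroMean, natCast_mul_cesaroMean, sum_range_succ, add_comm]

lemma mVal_mul_sum_abs_cesaroMean_sub_rpow_add_le (hp : 2 ≤ p) (x : ℕ → ℝ) (N : ℕ) :
    mVal p * ∑ n ∈ range N, |cesaroMean x (n + 1) - x (n + 1)| ^ p + N * |cesaroMean x N| ^ p ≤
      ∑ n ∈ range N, |x (n + 1)| ^ p := by
  induction N with
  | zero => simp
  | succ n ih =>
    have hstep := mVal_mul_abs_sub_rpow_add_le hp n.cast_nonneg (add_one_mul_cesaroMean_succ x n)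
    rw [sum_range_succ, sum_range_succ, Nat.cast_succ]
    linarith

theorem tsum_abs_cesaroMean_sub_rpow_le {x : ℕ → ℝ} (hp : 2 ≤ p)
    (hx : Summable fun n ↦ |x (n + 1)| ^ p) :
    ∑' n, |cesaroMean x (n + 1) - x (n + 1)| ^ p ≤ (mVal p)⁻¹ * ∑' n, |x (n + 1)| ^ p := by
  refine Real.tsum_le_of_sum_range_le (fun n ↦ by positivity) fun N ↦ ?_
  rw [le_inv_mul_iff₀ (mVal_pos (by linarith))]
  calc mVal p * ∑ n ∈ range N, |cesaroMean x (n + 1) - x (n + 1)| ^ p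
      ≤ mVal p * ∑ n ∈ range N, |cesaroMean x (n + 1) - x (n + 1)| ^ p
          + N * |cesaroMean x N| ^ p := le_add_of_nonneg_right (by positivity)
    _ ≤ ∑ n ∈ range N, |x (n + 1)| ^ p := mVal_mul_sum_abs_cesaroMean_sub_rpow_add_le hp x N
    _ ≤ ∑' n, |x (n + 1)| ^ p := hx.sum_le_tsum _ fun n _ ↦ by positivity

end UpperBound

section DecayingMeans

/-- The means of an almost extremal sequence: `1` for `n ≤ N`, and then given by the recursion
`(n + α) * y_{n+1} = n * y_n`, so of order `(N / n) ^ α`. The recursion makes the corresponding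
sequence equal to `(1 - α) * y_n` for `n > N`. -/
noncomputable def decayingMean (N : ℕ) (α : ℝ) (n : ℕ) : ℝ :=
  ∏ k ∈ Ico N n, (k : ℝ) / (k + α)

variable {N n : ℕ} {α p L : ℝ}

lemma decayingMean_of_le (h : n ≤ N) : decayingMean N α n = 1 := by
  rw [decayingMean, Ico_eq_empty_of_le h, prod_empty]

lemma add_mul_decayingMean_succ (hα : 0 < α) (h : N ≤ n) :
    (n + α) * decayingMean N α (n + 1) = n * decayingMean N α n := by
  have : (n : ℝ) + α ≠ 0 := by positivity
  rw [decayingMean, decayingMean, prod_Ico_succ_top h]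
  field_simp

lemma decayingMean_pos (hN : 0 < N) (hα : 0 < α) (n : ℕ) : 0 < decayingMean N α n := by
  refine prod_pos fun k hk ↦ ?_
  have : 0 < k := hN.trans_le (mem_Ico.1 hk).1
  positivity

lemma decayingMean_le_div (hN : 0 < N) (hα : 1 ≤ α) (h : N ≤ n) :
    decayingMean N α n ≤ N / n := by
  rw [le_div_iff₀' (by exact_mod_cast hN.trans_le h)]
  induction n, h using Nat.le_induction with
  | base => rw [decayingMean_of_le le_rfl, mul_one]
  | succ n h ih =>
    have hpos := decayingMean_pos hN (zero_lt_one.trans_le hα) (n + 1)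
    calc ((n + 1 : ℕ) : ℝ) * decayingMean N α (n + 1)
        ≤ (n + α) * decayingMean N α (n + 1) := by push_cast; gcongr
      _ = n * decayingMean N α n := add_mul_decayingMean_succ (zero_lt_one.trans_le hα) h
      _ ≤ N := ih

lemma decayingMean_rpow_le (hN : 0 < N) (hα : 1 ≤ α) (hp : 0 ≤ p) (h : N ≤ n) :
    decayingMean N α n ^ p ≤ N ^ p * (n : ℝ) ^ (-p) := by
  have hpos := decayingMean_pos hN (zero_lt_one.trans_le hα) n
  calc decayingMean N α n ^ p ≤ (N / n : ℝ) ^ p := by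
        gcongr
        exact decayingMean_le_div hN hα h
    _ = N ^ p * (n : ℝ) ^ (-p) := by
        rw [Real.div_rpow N.cast_nonneg n.cast_nonneg, Real.rpow_neg n.cast_nonneg, div_eq_mul_inv]

lemma summable_decayingMean_rpow (hN : 0 < N) (hα : 1 ≤ α) (hp : 1 < p) :
    Summable fun n ↦ decayingMean N α n ^ p := by
  have hbound : Summable fun n : ℕ ↦ (N : ℝ) ^ p * (n : ℝ) ^ (-p) :=
    (Real.summable_nat_rpow.2 (by linarith)).mul_left _
  refine hbound.of_norm_bounded_eventually_nat ?_
  filter_upwards [eventually_ge_atTop N] with n hn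
  have hpos := decayingMean_pos hN (zero_lt_one.trans_le hα) n
  rw [Real.norm_of_nonneg (by positivity)]
  exact decayingMean_rpow_le hN hα (by linarith) hn

lemma tendsto_mul_decayingMean_rpow (hN : 0 < N) (hα : 1 ≤ α) (hp : 1 < p) :
    Tendsto (fun n : ℕ ↦ n * decayingMean N α n ^ p) atTop (𝓝 0) := by
  have hlim : Tendsto (fun n : ℕ ↦ (N : ℝ) ^ p * (n : ℝ) ^ (-(p - 1))) atTop (𝓝 0) := by
    simpa using ((tendsto_rpow_neg_atTop (sub_pos.2 hp)).comp
      tendsto_natCast_atTop_atTop).const_mul ((N : ℝ) ^ p)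
  refine squeeze_zero' (.of_forall fun n ↦ ?_) ?_ hlim
  · have := decayingMean_pos hN (zero_lt_one.trans_le hα) n
    positivity
  filter_upwards [eventually_ge_atTop N] with n hn
  have hn₀ : (n : ℝ) ≠ 0 := by exact_mod_cast (hN.trans_le hn).ne'
  calc n * decayingMean N α n ^ p ≤ n * (N ^ p * (n : ℝ) ^ (-p)) := by
        gcongr
        exact decayingMean_rpow_le hN hα (by linarith) hn
    _ = N ^ p * (n : ℝ) ^ (-(p - 1)) := by
        rw [neg_sub, sub_eq_neg_add, Real.rpow_add_one hn₀]; ring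

lemma mul_decayingMean_rpow_sub_le (hN : 0 < N) (hα : 0 < α) (h : N ≤ n)
    (hL : n * ((1 + α / n) ^ p - 1) ≤ L + 1) :
    n * decayingMean N α n ^ p - (n + 1) * decayingMean N α (n + 1) ^ p ≤
      L * decayingMean N α (n + 1) ^ p := by
  have hn₀ : (0 : ℝ) < n := by exact_mod_cast hN.trans_le h
  have hpos := decayingMean_pos hN hα (n + 1)
  have hrec : decayingMean N α n = (1 + α / n) * decayingMean N α (n + 1) := by
    field_simp
    linarith [add_mul_decayingMean_succ hα h]
  rw [hrec, Real.mul_rpow (by positivity) hpos.le]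
  linarith [mul_le_mul_of_nonneg_right hL (by positivity : 0 ≤ decayingMean N α (n + 1) ^ p)]

lemma summable_decayingMean_rpow_tail (hN : 0 < N) (hα : 1 ≤ α) (hp : 1 < p) :
    Summable fun n ↦ decayingMean N α (n + N + 1) ^ p :=
  (summable_nat_add_iff (N + 1)).2 (summable_decayingMean_rpow hN hα hp)

lemma natCast_le_mul_tsum_decayingMean_rpow (hN : 0 < N) (hα : 1 ≤ α) (hp : 1 < p)
    (hL : ∀ n ≥ N, (n : ℝ) * ((1 + α / n) ^ p - 1) ≤ L + 1) :
    (N : ℝ) ≤ L * ∑' n, decayingMean N α (n + N + 1) ^ p := by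
  have htele := le_tsum_of_sub_succ_le
    ((tendsto_add_atTop_iff_nat N).2 (tendsto_mul_decayingMean_rpow hN hα hp))
    ((summable_decayingMean_rpow_tail hN hα hp).mul_left L) fun n ↦ by
      have hn : N ≤ n + N := Nat.le_add_left N n
      simpa [add_right_comm n 1 N] using
        mul_decayingMean_rpow_sub_le hN (zero_lt_one.trans_le hα) hn (hL _ hn)
  simpa [decayingMean_of_le, tsum_mul_left] using htele

end DecayingMeans

section Optimality

/-- The sequence whose Cesàro means are `y_1, y_2, …`; its term `0` is irrelevant. -/
def ofCesaroMean (y : ℕ → ℝ) (n : ℕ) : ℝ := n * y n - (n - 1) * y (n - 1)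

lemma ofCesaroMean_succ (y : ℕ → ℝ) (n : ℕ) :
    ofCesaroMean y (n + 1) = (n + 1) * y (n + 1) - n * y n := by
  simp [ofCesaroMean]

lemma cesaroMean_ofCesaroMean_succ (y : ℕ → ℝ) (n : ℕ) :
    cesaroMean (ofCesaroMean y) (n + 1) = y (n + 1) := by
  have htele : ∑ k ∈ range (n + 1), ofCesaroMean y (k + 1) = (n + 1) * y (n + 1) := by
    simpa [ofCesaroMean_succ] using sum_range_sub (fun k : ℕ ↦ (k : ℝ) * y k) (n + 1)
  rw [cesaroMean_succ, htele]
  field_simp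

variable {N n : ℕ} {α p L : ℝ}

lemma ofCesaroMean_decayingMean_of_lt (h : n < N) :
    ofCesaroMean (decayingMean N α) (n + 1) = 1 := by
  rw [ofCesaroMean_succ, decayingMean_of_le h, decayingMean_of_le h.le]
  ring

lemma ofCesaroMean_decayingMean_of_le (hα : 0 < α) (h : N ≤ n) :
    ofCesaroMean (decayingMean N α) (n + 1) = (1 - α) * decayingMean N α (n + 1) := by
  rw [ofCesaroMean_succ, ← add_mul_decayingMean_succ hα h]
  ring

lemma hasSum_abs_ofCesaroMean_decayingMean_rpow (hN : 0 < N) (hα : 1 ≤ α) (hp : 1 < p) :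
    HasSum (fun n ↦ |ofCesaroMean (decayingMean N α) (n + 1)| ^ p)
      ((α - 1) ^ p * ∑' n, decayingMean N α (n + N + 1) ^ p + N) := by
  have hα₀ : 0 < α := zero_lt_one.trans_le hα
  have hhead : ∑ n ∈ range N, |ofCesaroMean (decayingMean N α) (n + 1)| ^ p = N := by
    rw [sum_congr rfl fun n hn ↦ by
      rw [ofCesaroMean_decayingMean_of_lt (mem_range.1 hn), abs_one, Real.one_rpow]]
    simp
  have htail (n : ℕ) : |ofCesaroMean (decayingMean N α) (n + N + 1)| ^ p =
      (α - 1) ^ p * decayingMean N α (n + N + 1) ^ p := by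
    have hpos := decayingMean_pos hN hα₀ (n + N + 1)
    rw [ofCesaroMean_decayingMean_of_le hα₀ (Nat.le_add_left N n), abs_mul, abs_of_pos hpos,
      abs_sub_comm, abs_of_nonneg (sub_nonneg.2 hα), Real.mul_rpow (sub_nonneg.2 hα) hpos.le]
  have hsum := (summable_decayingMean_rpow_tail hN hα hp).hasSum.mul_left ((α - 1) ^ p)
  rw [← hasSum_nat_add_iff' N, hhead, add_sub_cancel_right]
  simpa only [htail] using hsum

lemma hasSum_abs_decayingMean_sub_rpow (hN : 0 < N) (hα : 1 ≤ α) (hp : 1 < p) :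
    HasSum (fun n ↦ |decayingMean N α (n + 1) - ofCesaroMean (decayingMean N α) (n + 1)| ^ p)
      (α ^ p * ∑' n, decayingMean N α (n + N + 1) ^ p) := by
  have hα₀ : 0 < α := zero_lt_one.trans_le hα
  have hhead : ∑ n ∈ range N,
      |decayingMean N α (n + 1) - ofCesaroMean (decayingMean N α) (n + 1)| ^ p = 0 :=
    sum_eq_zero fun n hn ↦ by
      have hn := mem_range.1 hn
      rw [ofCesaroMean_decayingMean_of_lt hn, decayingMean_of_le hn, sub_self, abs_zero,
        Real.zero_rpow (by linarith)]
  have htail (n : ℕ) :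
      |decayingMean N α (n + N + 1) - ofCesaroMean (decayingMean N α) (n + N + 1)| ^ p =
        α ^ p * decayingMean N α (n + N + 1) ^ p := by
    have hpos := decayingMean_pos hN hα₀ (n + N + 1)
    rw [ofCesaroMean_decayingMean_of_le hα₀ (Nat.le_add_left N n), ← one_sub_mul, sub_sub_cancel,
      abs_of_pos (by positivity), Real.mul_rpow hα₀.le hpos.le]
  have hsum := (summable_decayingMean_rpow_tail hN hα hp).hasSum.mul_left (α ^ p)
  rw [← hasSum_nat_add_iff' N, hhead, sub_zero]
  simpa only [htail] using hsum

theorem exists_rpow_mul_tsum_le_mul_tsum_cesaroMean_sub (hα : 1 ≤ α) (hp : 1 < p)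
    (hL : α * p - 1 < L) :
    ∃ x : ℕ → ℝ, (Summable fun n ↦ |x (n + 1)| ^ p) ∧ 0 < ∑' n, |x (n + 1)| ^ p ∧
      α ^ p * ∑' n, |x (n + 1)| ^ p ≤
        (L + (α - 1) ^ p) * ∑' n, |cesaroMean x (n + 1) - x (n + 1)| ^ p := by
  have hev : ∀ᶠ n : ℕ in atTop, (n : ℝ) * ((1 + α / n) ^ p - 1) < L + 1 :=
    (tendsto_natCast_mul_one_add_div_rpow_sub_one α p).eventually_lt_const (by linarith)
  obtain ⟨N, hNL, hN⟩ := ((eventually_forall_ge_atTop.2 hev).and (eventually_gt_atTop 0)).exists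
  have hx := hasSum_abs_ofCesaroMean_decayingMean_rpow hN hα hp
  have hdiff := hasSum_abs_decayingMean_sub_rpow hN hα hp
  have hNY := natCast_le_mul_tsum_decayingMean_rpow hN hα hp fun n hn ↦ (hNL n hn).le
  refine ⟨ofCesaroMean (decayingMean N α), hx.summable, ?_, ?_⟩
  · have : 0 ≤ ∑' n, decayingMean N α (n + N + 1) ^ p := tsum_nonneg fun n ↦
      Real.rpow_nonneg (decayingMean_pos hN (zero_lt_one.trans_le hα) _).le p
    have : 0 ≤ (α - 1) ^ p := Real.rpow_nonneg (sub_nonneg.2 hα) p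
    rw [hx.tsum_eq]
    positivity
  · simp only [cesaroMean_ofCesaroMean_succ]
    rw [hx.tsum_eq, hdiff.tsum_eq]
    have : 0 ≤ α ^ p := Real.rpow_nonneg (zero_le_one.trans hα) p
    linarith [mul_le_mul_of_nonneg_left hNY this]

lemma exists_mul_add_sub_one_rpow_lt {c : ℝ} (hp : 1 ≤ p) (hc : c < (mVal p)⁻¹) :
    ∃ α L : ℝ, 1 ≤ α ∧ α * p - 1 < L ∧ c * (L + (α - 1) ^ p) < α ^ p := by
  obtain ⟨t, ⟨ht₀, ht⟩, hct⟩ := exists_mul_mFun_lt_one hp hc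
  have hα : 1 ≤ t⁻¹ := (one_le_inv₀ ht₀).2 (by linarith)
  have hpow : 0 < t⁻¹ ^ p := by positivity
  have hval : c * (t⁻¹ * p - 1 + (t⁻¹ - 1) ^ p) < t⁻¹ ^ p := by
    have hhom : mFun p t * t⁻¹ ^ p = p * t⁻¹ + (t⁻¹ - 1) ^ p - 1 := by
      simpa using mFun_div_add_mul_rpow (p := p) zero_le_one (sub_nonneg.2 hα) (by linarith)
    calc c * (t⁻¹ * p - 1 + (t⁻¹ - 1) ^ p) = c * mFun p t * t⁻¹ ^ p := by
          rw [mul_assoc, hhom]; ring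
      _ < t⁻¹ ^ p := mul_lt_of_lt_one_left hpow hct
  have hcont : Continuous fun L ↦ c * (L + (t⁻¹ - 1) ^ p) := by fun_prop
  obtain ⟨L, hcL, hL⟩ := ((hcont.continuousAt.eventually_lt_const hval).filter_mono
    nhdsWithin_le_nhds |>.and self_mem_nhdsWithin).exists (f := 𝓝[>] (t⁻¹ * p - 1))
  exact ⟨t⁻¹, L, hα, hL, hcL⟩

theorem exists_mul_tsum_lt_tsum_cesaroMean_sub {c : ℝ} (hp : 1 < p) (hc : c < (mVal p)⁻¹) :
    ∃ x : ℕ → ℝ, (Summable fun n ↦ |x (n + 1)| ^ p) ∧ 0 < ∑' n, |x (n + 1)| ^ p ∧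
      c * ∑' n, |x (n + 1)| ^ p < ∑' n, |cesaroMean x (n + 1) - x (n + 1)| ^ p := by
  obtain ⟨α, L, hα, hL, hcL⟩ := exists_mul_add_sub_one_rpow_lt hp.le hc
  obtain ⟨x, hx, hpos, hle⟩ := exists_rpow_mul_tsum_le_mul_tsum_cesaroMean_sub hα hp hL
  refine ⟨x, hx, hpos, ?_⟩
  have hL₀ : 0 < L := by nlinarith
  have hK : 0 < L + (α - 1) ^ p := add_pos_of_pos_of_nonneg hL₀ (Real.rpow_nonneg (by linarith) p)
  refine lt_of_mul_lt_mul_left ?_ hK.le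
  calc (L + (α - 1) ^ p) * (c * ∑' n, |x (n + 1)| ^ p)
      = c * (L + (α - 1) ^ p) * ∑' n, |x (n + 1)| ^ p := by ring
    _ < α ^ p * ∑' n, |x (n + 1)| ^ p := by gcongr
    _ ≤ (L + (α - 1) ^ p) * ∑' n, |cesaroMean x (n + 1) - x (n + 1)| ^ p := hle

end Optimality

/-- Theorem 4: for `p ≥ 2`, the operator norm of `C - I` on `ℓ^p` equals `m_p^(-1/p)`:
with `y_n = (1/n) ∑_{k=1}^n x_k`, the inequality `∑ |y_n - x_n|^p ≤ (1/m_p) ∑ |x_n|^p`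
holds, and `1/m_p` is the least such constant. (Sequences are indexed so that term `n`
of the paper is `x (n+1)` here, `n : ℕ`.) -/
theorem stmt14 (p : ℝ) (hp : 2 ≤ p) :
    (∀ x : ℕ → ℝ, (Summable fun n : ℕ => |x (n + 1)| ^ p) →
      ∑' n : ℕ, |(1 / ((n : ℝ) + 1)) * (∑ k ∈ Finset.range (n + 1), x (k + 1)) - x (n + 1)| ^ p
        ≤ (mVal p)⁻¹ * ∑' n : ℕ, |x (n + 1)| ^ p) ∧
    ∀ c : ℝ, c < (mVal p)⁻¹ → ∃ x : ℕ → ℝ,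
      (Summable fun n : ℕ => |x (n + 1)| ^ p) ∧
      0 < ∑' n : ℕ, |x (n + 1)| ^ p ∧
      c * ∑' n : ℕ, |x (n + 1)| ^ p <
        ∑' n : ℕ,
          |(1 / ((n : ℝ) + 1)) * (∑ k ∈ Finset.range (n + 1), x (k + 1)) - x (n + 1)| ^ p := by
  simp only [← cesaroMean_succ]
  exact ⟨fun _ hx ↦ tsum_abs_cesaroMean_sub_rpow_le hp hx,
    fun _ hc ↦ exists_mul_tsum_lt_tsum_cesaroMean_sub (by linarith) hc⟩
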